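/- For a prime power q = 2^k, the graph G(q², q+1) has exactly (q⁵ − q⁴ + q³ − 2q²)/2 edges. -/

import Mathlib

/-- The scaling relation by the subgroup `H ≤ Fˣ` on nonzero pairs of field elements:
`(a₁,b₁) ∼ (a₂,b₂)` iff there is `h ∈ H` with `a₁ = h·a₂` and `b₁ = h·b₂`. -/
def Grel {F : Type} [Field F] (H : Subgroup Fˣ) (p p' : {p : F × F // p ≠ 0}) : Prop :=
  ∃ h ∈ H, p.1.1 = (h : F) * p'.1.1 ∧ p.1.2 = (h : F) * p'.1.2

/-- The vertex set of the graph `G(q,t)`: nonzero pairs modulo scaling by `H`. -/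
def GVertex (F : Type) [Field F] (H : Subgroup Fˣ) : Type :=
  Quot (Grel H)

/-- Membership of a field element in the subgroup `H ≤ Fˣ`. -/
def memH {F : Type} [Field F] (H : Subgroup Fˣ) (x : F) : Prop :=
  ∃ h ∈ H, (h : F) = x

/-- Adjacency in the graph `G(q,t)`: `⟨a,b⟩` and `⟨x,y⟩` are adjacent iff `a·x + b·y ∈ H`
(this condition is independent of the chosen representatives). -/
def GAdj {F : Type} [Field F] (H : Subgroup Fˣ) (u v : GVertex F H) : Prop :=
  ∃ p p' : {p : F × F // p ≠ 0},
    u = Quot.mk (Grel H) p ∧ v = Quot.mk (Grel H) p' ∧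
      memH H (p.1.1 * p'.1.1 + p.1.2 * p'.1.2)

/-- The edge set of the graph `G(q,t)`: unordered pairs of distinct adjacent vertices. -/
def GEdges (F : Type) [Field F] (H : Subgroup Fˣ) : Set (Sym2 (GVertex F H)) :=
  {e | ∃ u v : GVertex F H, e = s(u, v) ∧ u ≠ v ∧ GAdj H u v}

/-!
The set `F × F` minus the origin is partitioned into vertices, each consisting of `|H|` pairs, so
`|V| |H| = |F|² - 1`. A nonzero linear form on `F × F` takes every value equally often, so every
vertex has exactly `|F|` neighbours, itself included if it is adjacent to itself. In characteristic
two the quadratic form `x² + y² = (x + y)²` is a linear form followed by the Frobenius bijection,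
and therefore also takes every value `|F|` times: exactly `|F|` vertices are adjacent to themselves.
Counting the pairs of adjacent vertices gives `2 |E| + |F| = |V| |F|`.
-/

section Counting

theorem card_subtype_comp_of_card_fiber_eq {α β : Type*} [Finite α] [Finite β] (f : α → β) {n : ℕ}
    (hf : ∀ b, Nat.card {a // f a = b} = n) (P : β → Prop) :
    Nat.card {a // P (f a)} = Nat.card {b // P b} * n := by
  have := Fintype.ofFinite {b // P b}
  rw [← Nat.card_congr (Equiv.sigmaSubtypeFiberEquivSubtype f fun _ => Iff.rfl), Nat.card_sigma]
  simp only [hf, Finset.sum_const, Finset.card_univ, smul_eq_mul, Nat.card_eq_fintype_card]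

theorem card_fiber_linearForm_mul_card {K V : Type*} [DivisionRing K] [AddCommGroup V] [Module K V]
    [Finite V] {f : V →ₗ[K] K} (hf : f ≠ 0) (c : K) :
    Nat.card {v // f v = c} * Nat.card K = Nat.card V := by
  have hsurj : Function.Surjective f.toAddMonoidHom := LinearMap.surjective hf
  have : Finite K := Finite.of_surjective _ hsurj
  have hker : ∀ c, Nat.card {v // f v = c} = Nat.card f.toAddMonoidHom.ker := fun c =>
    Nat.card_congr (AddMonoidHom.fiberEquivKerOfSurjective hsurj c)
  have hcard := card_subtype_comp_of_card_fiber_eq f hker fun _ => True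
  rw [Nat.card_subtype_true, Nat.card_subtype_true] at hcard
  rw [hker, hcard, mul_comm]

theorem card_fiber_dotProduct {K : Type*} [DivisionRing K] [Finite K] {a : K × K} (ha : a ≠ 0)
    (c : K) : Nat.card {p : K × K // p.1 * a.1 + p.2 * a.2 = c} = Nat.card K := by
  let f : K × K →ₗ[K] K :=
    (LinearMap.toSpanSingleton K K a.1).coprod (LinearMap.toSpanSingleton K K a.2)
  have hf : f ≠ 0 := by
    intro h
    have h₁ : f (1, 0) = 0 := by rw [h, LinearMap.zero_apply]
    have h₂ : f (0, 1) = 0 := by rw [h, LinearMap.zero_apply]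
    exact ha (Prod.ext (by simpa [f] using h₁) (by simpa [f] using h₂))
  have hcard := card_fiber_linearForm_mul_card hf c
  rw [Nat.card_prod] at hcard
  exact Nat.eq_of_mul_eq_mul_right Nat.card_pos hcard

theorem card_fiber_mul_self_add_mul_self {K : Type*} [Field K] [Finite K] [CharP K 2] (c : K) :
    Nat.card {p : K × K // p.1 * p.1 + p.2 * p.2 = c} = Nat.card K := by
  obtain ⟨d, rfl⟩ := surjective_frobenius K 2 c
  have hsq : ∀ p : K × K, p.1 * p.1 + p.2 * p.2 = frobenius K 2 (p.1 * 1 + p.2 * 1) := fun p => by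
    rw [frobenius_def, mul_one, mul_one, sq, CharTwo.add_mul_self]
  simp only [hsq, (injective_frobenius K 2).eq_iff]
  exact card_fiber_dotProduct (a := (1, 1)) (by simp) d

end Counting

section Handshake

variable {V : Type*} {r : V → V → Prop}

open Classical in
theorem degree_fromRel_add_ite [Fintype V] [Std.Symm r] (u : V) :
    (SimpleGraph.fromRel r).degree u + (if r u u then 1 else 0) = Nat.card {v // r u v} := by
  have hN : (SimpleGraph.fromRel r).neighborFinset u = (Finset.univ.filter (r u)).erase u := by
    ext v
    simp [SimpleGraph.fromRel_adj, comm_of r (a := v), eq_comm]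
  rw [Nat.card_eq_fintype_card, Fintype.card_subtype,
    ← SimpleGraph.card_neighborFinset_eq_degree, hN]
  split_ifs with h
  · exact Finset.card_erase_add_one (by simpa using h)
  · rw [Finset.erase_eq_of_notMem (by simpa using h), add_zero]

theorem two_mul_ncard_edgeSet_fromRel_add_card_loops [Finite V] [Std.Symm r] {d : ℕ}
    (hd : ∀ u, Nat.card {v // r u v} = d) :
    2 * (SimpleGraph.fromRel r).edgeSet.ncard + Nat.card {v // r v v} = Nat.card V * d := by
  classical
  have := Fintype.ofFinite V
  calc
    _ = ∑ u, (SimpleGraph.fromRel r).degree u + ∑ u, (if r u u then 1 else 0) := by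
      rw [SimpleGraph.sum_degrees_eq_twice_card_edges, ← SimpleGraph.coe_edgeFinset,
        Set.ncard_coe_finset, Finset.sum_boole, Nat.card_eq_fintype_card, Fintype.card_subtype,
        Nat.cast_id]
    _ = Nat.card V * d := by
      simp only [← Finset.sum_add_distrib, degree_fromRel_add_ite, hd, Finset.sum_const,
        Finset.card_univ, smul_eq_mul, Nat.card_eq_fintype_card]

end Handshake

section Vertices

variable {F : Type} [Field F] {H : Subgroup Fˣ}

theorem Grel_iff_mem_orbit {p r : {p : F × F // p ≠ 0}} :
    Grel H p r ↔ p.1 ∈ MulAction.orbit H r.1 :=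
  ⟨fun ⟨h, hh, e₁, e₂⟩ => ⟨⟨h, hh⟩, (Prod.ext e₁ e₂).symm⟩,
    fun ⟨h, e⟩ => ⟨h, h.2, (congrArg Prod.fst e).symm, (congrArg Prod.snd e).symm⟩⟩

theorem Grel_equivalence : Equivalence (Grel H) := by
  let s : Setoid {p : F × F // p ≠ 0} := (MulAction.orbitRel H (F × F)).comap Subtype.val
  have hrel : Grel H = s := by
    ext p r
    exact Grel_iff_mem_orbit
  exact hrel ▸ s.iseqv

theorem mk_eq_mk_iff_Grel {p r : {p : F × F // p ≠ 0}} :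
    Quot.mk (Grel H) p = Quot.mk (Grel H) r ↔ Grel H p r := by
  rw [Quot.eq, Grel_equivalence.eqvGen_iff]

theorem card_orbit_of_ne_zero {r : F × F} (hr : r ≠ 0) :
    Nat.card (MulAction.orbit H r) = Nat.card H := by
  have hinj : Function.Injective fun h : H => h • r := fun g h e =>
    Subtype.ext (Units.ext (smul_left_injective F hr e))
  exact Nat.card_range_of_injective hinj

instance [Finite F] : Finite (GVertex F H) :=
  Finite.of_surjective (Quot.mk (Grel H)) Quot.mk_surjective

theorem card_fiber_mk (v : GVertex F H) :
    Nat.card {p // Quot.mk (Grel H) p = v} = Nat.card H := by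
  obtain ⟨r, rfl⟩ := Quot.mk_surjective v
  have hne : ∀ {p : F × F}, p ∈ MulAction.orbit H r.1 → p ≠ 0 := by
    rintro _ ⟨h, rfl⟩
    exact (smul_ne_zero_iff_ne h).2 r.2
  calc
    _ = Nat.card {p : {p : F × F // p ≠ 0} // p.1 ∈ MulAction.orbit H r.1} :=
      Nat.card_congr (Equiv.subtypeEquivRight fun _ => mk_eq_mk_iff_Grel.trans Grel_iff_mem_orbit)
    _ = Nat.card (MulAction.orbit H r.1) := Nat.card_congr (Equiv.subtypeSubtypeEquivSubtype hne)
    _ = Nat.card H := card_orbit_of_ne_zero r.2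

theorem card_GVertex_mul_card_add_one [Finite F] (H : Subgroup Fˣ) :
    Nat.card (GVertex F H) * Nat.card H + 1 = Nat.card F ^ 2 := by
  classical
  have := Fintype.ofFinite F
  have hcard := card_subtype_comp_of_card_fiber_eq (Quot.mk (Grel H)) card_fiber_mk fun _ => True
  rw [Nat.card_subtype_true, Nat.card_subtype_true] at hcard
  rw [GVertex, ← hcard, sq, ← Nat.card_prod, Nat.card_eq_fintype_card, Nat.card_eq_fintype_card,
    Fintype.card_subtype_compl, Fintype.card_subtype_eq, Nat.sub_add_cancel Fintype.card_pos]

end Vertices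

section Adjacency

variable {F : Type} [Field F] {H : Subgroup Fˣ}

theorem memH.ne_zero {x : F} (hx : memH H x) : x ≠ 0 := by
  obtain ⟨h, -, rfl⟩ := hx
  exact h.ne_zero

theorem memH.mul {x y : F} (hx : memH H x) (hy : memH H y) : memH H (x * y) := by
  obtain ⟨g, hg, rfl⟩ := hx
  obtain ⟨h, hh, rfl⟩ := hy
  exact ⟨g * h, H.mul_mem hg hh, Units.val_mul g h⟩

theorem card_memH (H : Subgroup Fˣ) : Nat.card {x // memH H x} = Nat.card H :=
  Nat.card_image_of_injective Units.val_injective (H : Set Fˣ)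

theorem GAdj_mk_mk {p r : {p : F × F // p ≠ 0}} :
    GAdj H (Quot.mk _ p) (Quot.mk _ r) ↔ memH H (p.1.1 * r.1.1 + p.1.2 * r.1.2) := by
  refine ⟨?_, fun h => ⟨p, r, rfl, rfl, h⟩⟩
  rintro ⟨p', r', hp, hr, hmem⟩
  obtain ⟨g, hg, hp₁, hp₂⟩ := mk_eq_mk_iff_Grel.1 hp
  obtain ⟨h, hh, hr₁, hr₂⟩ := mk_eq_mk_iff_Grel.1 hr
  have hscale : p.1.1 * r.1.1 + p.1.2 * r.1.2 =
      (g : F) * h * (p'.1.1 * r'.1.1 + p'.1.2 * r'.1.2) := by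
    rw [hp₁, hp₂, hr₁, hr₂]
    ring
  rw [hscale]
  exact (memH.mul ⟨g, hg, rfl⟩ ⟨h, hh, rfl⟩).mul hmem

instance : Std.Symm (GAdj H) where
  symm := by
    rintro _ _ ⟨p, r, hp, hr, hmem⟩
    exact ⟨r, p, hr, hp, by simpa only [mul_comm] using hmem⟩

theorem GEdges_eq_edgeSet_fromRel (H : Subgroup Fˣ) :
    GEdges F H = (SimpleGraph.fromRel (GAdj H)).edgeSet := by
  ext e
  induction e with | _ u v
  rw [SimpleGraph.mem_edgeSet, SimpleGraph.fromRel_adj, comm_of (GAdj H) (a := v), or_self]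
  refine ⟨?_, fun ⟨hne, hadj⟩ => ⟨u, v, rfl, hne, hadj⟩⟩
  rintro ⟨a, b, hab, hne, hadj⟩
  obtain ⟨rfl, rfl⟩ | ⟨rfl, rfl⟩ := Sym2.eq_iff.1 hab
  · exact ⟨hne, hadj⟩
  · exact ⟨hne.symm, symm hadj⟩

theorem card_subtype_of_mk_iff_memH [Finite F] {S : GVertex F H → Prop} {f : F × F → F}
    (hf : ∀ c, Nat.card {p // f p = c} = Nat.card F) (hf₀ : f 0 = 0)
    (hS : ∀ p, S (Quot.mk _ p) ↔ memH H (f p.1)) : Nat.card {v // S v} = Nat.card F := by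
  have hne : ∀ {p : F × F}, memH H (f p) → p ≠ 0 := fun hp h₀ => hp.ne_zero (h₀ ▸ hf₀)
  have hcount : Nat.card {v // S v} * Nat.card H = Nat.card F * Nat.card H :=
    calc
      _ = Nat.card {p : {p : F × F // p ≠ 0} // S (Quot.mk _ p)} :=
        (card_subtype_comp_of_card_fiber_eq _ card_fiber_mk S).symm
      _ = Nat.card {p : {p : F × F // p ≠ 0} // memH H (f p.1)} :=
        Nat.card_congr (Equiv.subtypeEquivRight hS)
      _ = Nat.card {p // memH H (f p)} := Nat.card_congr (Equiv.subtypeSubtypeEquivSubtype hne)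
      _ = Nat.card F * Nat.card H := by
        rw [card_subtype_comp_of_card_fiber_eq f hf, card_memH, mul_comm]
  exact Nat.eq_of_mul_eq_mul_right Nat.card_pos hcount

theorem card_subtype_GAdj [Finite F] (u : GVertex F H) :
    Nat.card {v // GAdj H u v} = Nat.card F := by
  obtain ⟨r, rfl⟩ := Quot.mk_surjective u
  refine card_subtype_of_mk_iff_memH (card_fiber_dotProduct r.2) (by simp) fun p => ?_
  rw [GAdj_mk_mk, mul_comm r.1.1, mul_comm r.1.2]

theorem card_subtype_GAdj_self [Finite F] [CharP F 2] (H : Subgroup Fˣ) :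
    Nat.card {v // GAdj H v v} = Nat.card F :=
  card_subtype_of_mk_iff_memH card_fiber_mul_self_add_mul_self (by simp) fun _ => GAdj_mk_mk

end Adjacency

theorem GEdges_card_even_general {F : Type} [Field F] [Finite F] [CharP F 2] (H : Subgroup Fˣ) :
    2 * ((GEdges F H).ncard : ℤ) * Nat.card H =
      Nat.card F * ((Nat.card F : ℤ) ^ 2 - 1 - Nat.card H) := by
  have hE := two_mul_ncard_edgeSet_fromRel_add_card_loops (card_subtype_GAdj (H := H))
  rw [← GEdges_eq_edgeSet_fromRel, card_subtype_GAdj_self] at hE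
  have hV := card_GVertex_mul_card_add_one H
  zify at hE hV
  linear_combination (Nat.card H : ℤ) * hE + (Nat.card F : ℤ) * hV

/-- For a prime power `q = 2^k`, the graph `G(q², q+1)` has exactly
`(q⁵ − q⁴ + q³ − 2q²)/2` edges. -/
theorem GEdges_card_even {q : ℕ} (hq : IsPrimePow q) (h2 : ∃ k, q = 2 ^ k)
    {F : Type} [Field F] [Fintype F] (hF : Fintype.card F = q ^ 2)
    (H : Subgroup Fˣ) (hH : Nat.card H = q + 1) :
    2 * ((GEdges F H).ncard : ℤ) =
      (q : ℤ) ^ 5 - (q : ℤ) ^ 4 + (q : ℤ) ^ 3 - 2 * (q : ℤ) ^ 2 := by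
  obtain ⟨k, rfl⟩ := h2
  have : CharP F 2 := charP_of_card_eq_prime_pow (hF.trans (pow_mul 2 k 2).symm)
  have hcard := GEdges_card_even_general H
  rw [hH, Nat.card_eq_fintype_card, hF] at hcard
  push_cast at hcard ⊢
  have hq₁ : (2 : ℤ) ^ k + 1 ≠ 0 := by positivity
  exact mul_right_cancel₀ hq₁ (by linear_combination hcard)
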